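/- arXiv:2512.14497 — 2 statements merged into one kernel-verified Lean document; each statement's English description precedes it below -/
import Mathlib

section
/- Let n ≤ m, let (α_k)_{k∈Fin n} be an orthonormal basis of ℂ^n, let (β_k)_{k∈Fin n} be an orthonormal family in ℂ^m, let λ : Fin n → ℝ with λ_k ≥ 0, and let ψ := ∑_k √λ_k (α_k ⊗ β_k) ∈ ℂ^{nm}, where (α ⊗ β)_{(i,j)} := α_i β_j. Set P_k := |α_k⟩⟨α_k|. Then ∑_k (P_k ⊗ I_m) |ψ⟩⟨ψ| (P_k ⊗ I_m) = ∑_k λ_k |α_k ⊗ β_k⟩⟨α_k ⊗ β_k|. -/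
open scoped BigOperators ComplexOrder
open Matrix Kronecker

/-- Nondecreasing rearrangement of a finite real-valued family. -/
noncomputable def sortUp {ι : Type*} [Fintype ι] (f : ι → ℝ) : Fin (Fintype.card ι) → ℝ :=
  (f ∘ (Fintype.equivFin ι).symm) ∘ Tuple.sort (f ∘ (Fintype.equivFin ι).symm)

/-- Nonincreasing rearrangement of a finite real-valued family. -/
noncomputable def sortDown {ι : Type*} [Fintype ι] (f : ι → ℝ) : Fin (Fintype.card ι) → ℝ :=
  fun i => sortUp f i.rev

/-- Ergotropy ξ(ρ,H) = Tr(ρH) − inf over unitaries V of Tr(V ρ V* H). -/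
noncomputable def ergotropy {ι : Type*} [Fintype ι] [DecidableEq ι] (ρ H : Matrix ι ι ℂ) : ℝ :=
  ((ρ * H).trace).re -
    ⨅ V : Matrix.unitaryGroup ι ℂ,
      (((V : Matrix ι ι ℂ) * ρ * star (V : Matrix ι ι ℂ) * H).trace).re

/-- Passive energy E_p(ρ,H) = ∑ λ_i^↓ ε_i^↑. -/
noncomputable def passiveEnergy {ι : Type*} [Fintype ι] [DecidableEq ι]
    {ρ H : Matrix ι ι ℂ} (hρ : ρ.IsHermitian) (hH : H.IsHermitian) : ℝ :=
  ∑ i, sortDown hρ.eigenvalues i * sortUp hH.eigenvalues i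

/-- |u⟩⟨u|, the matrix with entries u_i conj(u_j). -/
noncomputable def ketbra {ι : Type*} (u : ι → ℂ) : Matrix ι ι ℂ := Matrix.vecMulVec u (star u)

/-- Tensor (Kronecker) product of vectors: (u ⊗ v)_(i,j) = u_i v_j. -/
noncomputable def vecTensor {ιa ιb : Type*} (u : ιa → ℂ) (v : ιb → ℂ) : ιa × ιb → ℂ :=
  fun p => u p.1 * v p.2

/-- The local measurement channel Π(ρ) = ∑_k (P_k ⊗ I) ρ (P_k ⊗ I). -/
noncomputable def pinch {ιa ιb K : Type*} [Fintype ιa] [Fintype ιb] [Fintype K]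
    [DecidableEq ιa] [DecidableEq ιb]
    (P : K → Matrix ιa ιa ℂ) (ρ : Matrix (ιa × ιb) (ιa × ιb) ℂ) :
    Matrix (ιa × ιb) (ιa × ιb) ℂ :=
  ∑ k, (P k ⊗ₖ (1 : Matrix ιb ιb ℂ)) * ρ * (P k ⊗ₖ (1 : Matrix ιb ιb ℂ))

/-- Local ergotropy ξ^l(ρ,H) = Tr(ρH) − inf over local unitaries U⊗V of Tr((U⊗V) ρ (U⊗V)* H). -/
noncomputable def localErgotropy {n m : ℕ}
    (ρ H : Matrix (Fin n × Fin m) (Fin n × Fin m) ℂ) : ℝ :=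
  ((ρ * H).trace).re -
    ⨅ W : Matrix.unitaryGroup (Fin n) ℂ × Matrix.unitaryGroup (Fin m) ℂ,
      ((((W.1 : Matrix (Fin n) (Fin n) ℂ) ⊗ₖ (W.2 : Matrix (Fin m) (Fin m) ℂ)) * ρ *
        star ((W.1 : Matrix (Fin n) (Fin n) ℂ) ⊗ₖ (W.2 : Matrix (Fin m) (Fin m) ℂ)) * H).trace).re

/-- First marginal (partial trace over the second factor). -/
noncomputable def marginalA {n m : ℕ} (ρ : Matrix (Fin n × Fin m) (Fin n × Fin m) ℂ) :
    Matrix (Fin n) (Fin n) ℂ :=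
  Matrix.of fun i i' => ∑ j, ρ (i, j) (i', j)

/-- Second marginal (partial trace over the first factor). -/
noncomputable def marginalB {n m : ℕ} (ρ : Matrix (Fin n × Fin m) (Fin n × Fin m) ℂ) :
    Matrix (Fin m) (Fin m) ℂ :=
  Matrix.of fun j j' => ∑ i, ρ (i, j) (i, j')

/-!
Write `ψ = ∑ₗ αₗ ⊗ βₗ`, the amplitudes being absorbed into the second factors. By orthonormality of
`α`, the projector `|αₖ⟩⟨αₖ| ⊗ 1` selects the single summand `αₖ ⊗ βₖ`, and conjugating `|ψ⟩⟨ψ|`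
by a Hermitian matrix `A` gives `|Aψ⟩⟨Aψ|`. Hence the `k`-th term of the pinching is
`|αₖ ⊗ βₖ⟩⟨αₖ ⊗ βₖ|`, and an amplitude `√λₖ` comes out of it as the weight `λₖ`.
-/

section Ketbra

variable {ι κ : Type*}

lemma isHermitian_ketbra (u : ι → ℂ) : (ketbra u).IsHermitian := by
  rw [IsHermitian, ketbra, conjTranspose_vecMulVec, star_star]

lemma ketbra_smul (c : ℂ) (u : ι → ℂ) : ketbra (c • u) = (c * star c) • ketbra u := by
  rw [ketbra, star_smul, smul_vecMulVec, vecMulVec_smul, smul_smul, ketbra]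

lemma ketbra_sqrt_smul {r : ℝ} (hr : 0 ≤ r) (u : ι → ℂ) :
    ketbra ((√r : ℂ) • u) = (r : ℂ) • ketbra u := by
  rw [ketbra_smul, RCLike.star_def, Complex.conj_ofReal, ← Complex.ofReal_mul,
    Real.mul_self_sqrt hr]

lemma ketbra_mulVec [Fintype ι] (a u : ι → ℂ) : ketbra a *ᵥ u = (star a ⬝ᵥ u) • a := by
  rw [ketbra, vecMulVec_mulVec, op_smul_eq_smul]

lemma mul_ketbra_mul_conjTranspose [Fintype ι] (A : Matrix κ ι ℂ) (u : ι → ℂ) :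
    A * ketbra u * Aᴴ = ketbra (A *ᵥ u) := by
  rw [ketbra, mul_vecMulVec, vecMulVec_mul, ← star_mulVec, ketbra]

end Ketbra

section VecTensor

variable {ιa ιb κa κb : Type*}

lemma smul_vecTensor (c : ℂ) (u : ιa → ℂ) (v : ιb → ℂ) :
    vecTensor (c • u) v = c • vecTensor u v :=
  funext fun _ => mul_assoc _ _ _

lemma vecTensor_smul (c : ℂ) (u : ιa → ℂ) (v : ιb → ℂ) :
    vecTensor u (c • v) = c • vecTensor u v :=
  funext fun _ => mul_left_comm _ _ _

lemma kronecker_mulVec_vecTensor [Fintype ιa] [Fintype ιb] (A : Matrix κa ιa ℂ)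
    (B : Matrix κb ιb ℂ) (u : ιa → ℂ) (v : ιb → ℂ) :
    (A ⊗ₖ B) *ᵥ vecTensor u v = vecTensor (A *ᵥ u) (B *ᵥ v) := by
  ext ⟨i, j⟩
  simp only [mulVec, dotProduct, kronecker_apply, vecTensor, Finset.sum_mul_sum,
    Fintype.sum_prod_type, mul_mul_mul_comm]

end VecTensor

section Pinch

variable {ιa ιb K : Type*} [Fintype ιa] [Fintype ιb] [DecidableEq ιb] [Fintype K]

lemma pinch_ketbra [DecidableEq ιa] {P : K → Matrix ιa ιa ℂ} (hP : ∀ k, (P k).IsHermitian)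
    (ψ : ιa × ιb → ℂ) :
    pinch P (ketbra ψ) = ∑ k, ketbra ((P k ⊗ₖ (1 : Matrix ιb ιb ℂ)) *ᵥ ψ) :=
  Finset.sum_congr rfl fun k _ => by
    rw [← mul_ketbra_mul_conjTranspose, conjTranspose_kronecker, hP k, conjTranspose_one]

variable [DecidableEq K]

lemma ketbra_kronecker_one_mulVec_sum_vecTensor {α : K → ιa → ℂ}
    (hα : ∀ k l, star (α k) ⬝ᵥ α l = if k = l then 1 else 0) (β : K → ιb → ℂ) (k : K) :
    (ketbra (α k) ⊗ₖ (1 : Matrix ιb ιb ℂ)) *ᵥ ∑ l, vecTensor (α l) (β l)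
      = vecTensor (α k) (β k) :=
  calc
    _ = ∑ l, (if k = l then 1 else 0 : ℂ) • vecTensor (α k) (β l) := by
      simp only [mulVec_sum, kronecker_mulVec_vecTensor, ketbra_mulVec, one_mulVec,
        smul_vecTensor, hα]
    _ = vecTensor (α k) (β k) := by
      simp only [ite_smul, one_smul, zero_smul, Finset.sum_ite_eq, Finset.mem_univ, if_true]

variable [DecidableEq ιa]

lemma pinch_ketbra_sum_vecTensor {α : K → ιa → ℂ}
    (hα : ∀ k l, star (α k) ⬝ᵥ α l = if k = l then 1 else 0) (β : K → ιb → ℂ) :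
    pinch (fun k => ketbra (α k)) (ketbra (∑ k, vecTensor (α k) (β k)))
      = ∑ k, ketbra (vecTensor (α k) (β k)) := by
  simp only [pinch_ketbra fun k => isHermitian_ketbra (α k),
    ketbra_kronecker_one_mulVec_sum_vecTensor hα]

theorem pinch_schmidt_pure_state_general {α : K → ιa → ℂ}
    (hα : ∀ k l, star (α k) ⬝ᵥ α l = if k = l then 1 else 0) (β : K → ιb → ℂ)
    {lam : K → ℝ} (hlam : ∀ k, 0 ≤ lam k) :
    pinch (fun k => ketbra (α k)) (ketbra (∑ k, (√(lam k) : ℂ) • vecTensor (α k) (β k)))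
      = ∑ k, (lam k : ℂ) • ketbra (vecTensor (α k) (β k)) := by
  simp only [← vecTensor_smul, pinch_ketbra_sum_vecTensor hα]
  simp only [vecTensor_smul, ketbra_sqrt_smul (hlam _)]

end Pinch

/-- pinching a pure state in Schmidt form by its Schmidt projectors
yields the corresponding diagonal mixture. -/
theorem pinch_schmidt_pure_state {n m : ℕ} (hnm : n ≤ m)
    (α : Fin n → Fin n → ℂ) (β : Fin n → Fin m → ℂ)
    (hα : ∀ k l, star (α k) ⬝ᵥ α l = if k = l then 1 else 0)
    (hβ : ∀ k l, star (β k) ⬝ᵥ β l = if k = l then 1 else 0)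
    (lam : Fin n → ℝ) (hlam : ∀ k, 0 ≤ lam k)
    (ψ : Fin n × Fin m → ℂ)
    (hψ : ψ = ∑ k, ((Real.sqrt (lam k) : ℝ) : ℂ) • vecTensor (α k) (β k)) :
    pinch (fun k => ketbra (α k)) (ketbra ψ)
      = ∑ k, ((lam k : ℝ) : ℂ) • ketbra (vecTensor (α k) (β k)) := by
  rw [hψ, pinch_schmidt_pure_state_general hα β hlam]
end

section
/- Let H be an N×N Hermitian complex matrix, let (v_i)_{i∈Fin N} be an orthonormal basis of ℂ^N, let λ : Fin N → ℝ with λ_i ≥ 0 and ∑_i λ_i = 1, and set σ := ∑_i λ_i |v_i⟩⟨v_i|. Then ξ(σ, H) = ∑_i λ_i ⟨v_i, H v_i⟩ − ∑_{i=1}^N λ_i^↓ ε_i^↑, where λ_1^↓ ≥ … ≥ λ_N^↓ is the nonincreasing rearrangement of λ and ε_1^↑ ≤ … ≤ ε_N^↑ are the eigenvalues of H listed with multiplicity in nondecreasing order. -/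
open scoped BigOperators ComplexOrder
open Matrix Kronecker

/-!
For unitary `V`, the energy of `V σ V*` is `∑ |X j i|² λ i ε j`, where `X` is `V` written from the
basis `v` into an eigenbasis of `H`. As `V` ranges over the unitaries so does `X`, and the matrix of
the `|X j i|²` is doubly stochastic, i.e. (Birkhoff) a convex combination of permutation matrices.
By the rearrangement inequality each permutation gives at least `∑ λ↓ ε↑`, and some permutation,
whose matrix is itself a unitary `X`, attains this value.
-/

open Unitary (conjStarAlgAut conjStarAlgAut_apply conjStarAlgAut_mul_apply)

section Rearrangement

variable {ι : Type*} [Fintype ι]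

theorem sortUp_monotone (f : ι → ℝ) : Monotone (sortUp f) :=
  Tuple.monotone_sort _

theorem sortDown_antitone (f : ι → ℝ) : Antitone (sortDown f) :=
  fun _ _ hij => sortUp_monotone f (Fin.rev_le_rev.mpr hij)

theorem exists_equiv_comp_eq_sortUp (f : ι → ℝ) :
    ∃ e : Fin (Fintype.card ι) ≃ ι, f ∘ e = sortUp f :=
  ⟨(Tuple.sort (f ∘ (Fintype.equivFin ι).symm)).trans (Fintype.equivFin ι).symm, rfl⟩

theorem exists_equiv_comp_eq_sortDown (f : ι → ℝ) :
    ∃ e : Fin (Fintype.card ι) ≃ ι, f ∘ e = sortDown f := by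
  obtain ⟨e, he⟩ := exists_equiv_comp_eq_sortUp f
  exact ⟨Fin.revPerm.trans e, funext fun i => congrFun he i.rev⟩

theorem isLeast_range_dotProduct_comp_perm (f g : ι → ℝ) :
    IsLeast (Set.range fun π : Equiv.Perm ι => g ⬝ᵥ (f ∘ π)) (sortDown f ⬝ᵥ sortUp g) := by
  obtain ⟨d, hd⟩ := exists_equiv_comp_eq_sortDown f
  obtain ⟨e, he⟩ := exists_equiv_comp_eq_sortUp g
  have hanti : Antivary (f ∘ d) (g ∘ e) :=
    hd ▸ he ▸ (sortDown_antitone f).antivary (sortUp_monotone g)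
  rw [← hd, ← he]
  refine ⟨⟨e.symm.trans d, ?_⟩, ?_⟩
  · calc g ⬝ᵥ ((f ∘ d) ∘ e.symm) = (g ∘ e) ⬝ᵥ (f ∘ d) := dotProduct_comp_equiv_symm _ _ e
      _ = (f ∘ d) ⬝ᵥ (g ∘ e) := dotProduct_comm _ _
  · rintro _ ⟨π, rfl⟩
    calc (f ∘ d) ⬝ᵥ (g ∘ e)
        ≤ ∑ i, (f ∘ d) (((e.trans π).trans d.symm) i) * (g ∘ e) i :=
          hanti.sum_mul_le_sum_comp_perm_mul
      _ = (g ∘ e) ⬝ᵥ ((f ∘ π) ∘ e) := by simp [dotProduct, mul_comm]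
      _ = g ⬝ᵥ (f ∘ π) := comp_equiv_dotProduct_comp_equiv _ _ e

theorem sortDown_dotProduct_sortUp_le_of_mem_doublyStochastic [DecidableEq ι]
    {M : Matrix ι ι ℝ} (hM : M ∈ doublyStochastic ℝ ι) (f g : ι → ℝ) :
    sortDown f ⬝ᵥ sortUp g ≤ g ⬝ᵥ M *ᵥ f := by
  obtain ⟨w, hw_nonneg, hw_sum, rfl⟩ := exists_eq_sum_perm_of_mem_doublyStochastic hM
  calc sortDown f ⬝ᵥ sortUp g
      = ∑ π, w π * (sortDown f ⬝ᵥ sortUp g) := by rw [← Finset.sum_mul, hw_sum, one_mul]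
    _ ≤ ∑ π, w π * (g ⬝ᵥ (f ∘ π)) := by
        gcongr with π
        · exact hw_nonneg π
        · exact (isLeast_range_dotProduct_comp_perm f g).2 ⟨π, rfl⟩
    _ = g ⬝ᵥ (∑ π, w π • π.permMatrix ℝ) *ᵥ f := by
        simp only [sum_mulVec, smul_mulVec, permMatrix_mulVec, dotProduct_sum, dotProduct_smul,
          smul_eq_mul]

end Rearrangement

section Unistochastic

variable {ι 𝕜 : Type*} [DecidableEq ι] [RCLike 𝕜]

theorem map_norm_sq_permMatrix (π : Equiv.Perm ι) :
    (π.permMatrix 𝕜).map (‖·‖ ^ 2) = π.permMatrix ℝ := by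
  ext i j
  simp [PEquiv.toMatrix_apply, apply_ite]

variable [Fintype ι]

theorem sum_norm_sq_row_of_mem_unitaryGroup {U : Matrix ι ι 𝕜} (hU : U ∈ unitaryGroup ι 𝕜)
    (i : ι) : ∑ j, ‖U i j‖ ^ 2 = 1 := by
  have hdiag : (U * star U) i i = 1 := by rw [mem_unitaryGroup_iff.mp hU, one_apply_eq]
  simp only [mul_apply, star_apply, RCLike.star_def, RCLike.mul_conj] at hdiag
  exact_mod_cast hdiag

theorem map_norm_sq_mem_doublyStochastic {U : Matrix ι ι 𝕜} (hU : U ∈ unitaryGroup ι 𝕜) :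
    U.map (‖·‖ ^ 2) ∈ doublyStochastic ℝ ι := by
  refine mem_doublyStochastic_iff_sum.mpr
    ⟨fun _ _ => sq_nonneg _, sum_norm_sq_row_of_mem_unitaryGroup hU, fun j => ?_⟩
  simpa only [star_apply, norm_star, map_apply] using
    sum_norm_sq_row_of_mem_unitaryGroup (Unitary.star_mem hU) j

end Unistochastic

section UnitaryConjugation

variable {ι R : Type*} [Fintype ι] [DecidableEq ι] [CommRing R] [StarRing R]

theorem permMatrix_mem_unitaryGroup (π : Equiv.Perm ι) : π.permMatrix R ∈ unitaryGroup ι R := by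
  rw [mem_unitaryGroup_iff, star_eq_conjTranspose, conjTranspose_permMatrix, ← permMatrix_mul,
    inv_mul_cancel, permMatrix_one]

theorem transpose_of_mem_unitaryGroup {v : ι → ι → R}
    (hv : ∀ i j, star (v i) ⬝ᵥ v j = if i = j then 1 else 0) :
    (of v)ᵀ ∈ unitaryGroup ι R :=
  mem_unitaryGroup_iff'.mpr <| Matrix.ext fun i j => (hv i j).trans one_apply.symm

theorem trace_conjStarAlgAut (U : unitaryGroup ι R) (A : Matrix ι ι R) :
    (conjStarAlgAut R _ U A).trace = A.trace := by
  rw [conjStarAlgAut_apply, trace_mul_cycle, Unitary.coe_star_mul_self, one_mul]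

theorem trace_conjStarAlgAut_mul_conjStarAlgAut (U V W : unitaryGroup ι R) (A B : Matrix ι ι R) :
    (conjStarAlgAut R _ V (conjStarAlgAut R _ W A) * conjStarAlgAut R _ U B).trace
      = (conjStarAlgAut R _ (U⁻¹ * V * W) A * B).trace := by
  rw [← trace_conjStarAlgAut U (_ * B), map_mul, ← conjStarAlgAut_mul_apply,
    ← conjStarAlgAut_mul_apply, mul_assoc, mul_inv_cancel_left]

end UnitaryConjugation

section UnitaryOrbit

variable {ι κ 𝕜 : Type*} [Fintype ι] [DecidableEq ι] [RCLike 𝕜]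

theorem mul_diagonal_ofReal_mul_conjTranspose_apply_self (X : Matrix κ ι 𝕜) (f : ι → ℝ) (j : κ) :
    (X * diagonal (RCLike.ofReal ∘ f : ι → 𝕜) * Xᴴ) j j
      = ((X.map (‖·‖ ^ 2) *ᵥ f) j : 𝕜) := by
  simp only [mul_apply (N := Xᴴ), mul_diagonal, conjTranspose_apply, mulVec, dotProduct, map_apply,
    Function.comp_apply, RCLike.star_def, RCLike.ofReal_sum, RCLike.ofReal_mul, RCLike.ofReal_pow,
    ← RCLike.mul_conj, mul_right_comm]

theorem re_trace_mul_diagonal_mul_conjTranspose_mul_diagonal [Fintype κ] [DecidableEq κ]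
    (X : Matrix κ ι 𝕜) (f : ι → ℝ) (g : κ → ℝ) :
    RCLike.re (X * diagonal (RCLike.ofReal ∘ f : ι → 𝕜) * Xᴴ *
        diagonal (RCLike.ofReal ∘ g : κ → 𝕜)).trace
      = g ⬝ᵥ X.map (‖·‖ ^ 2) *ᵥ f := by
  simp only [trace, diag_apply, mul_diagonal, mul_diagonal_ofReal_mul_conjTranspose_apply_self,
    Function.comp_apply, ← RCLike.ofReal_mul, map_sum, RCLike.ofReal_re]
  exact dotProduct_comm _ _

theorem isLeast_range_re_trace_conjStarAlgAut_diagonal_mul_diagonal (f g : ι → ℝ) :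
    IsLeast (Set.range fun X : unitaryGroup ι 𝕜 =>
        RCLike.re (conjStarAlgAut 𝕜 _ X (diagonal (RCLike.ofReal ∘ f)) *
          diagonal (RCLike.ofReal ∘ g)).trace)
      (sortDown f ⬝ᵥ sortUp g) := by
  simp only [conjStarAlgAut_apply, star_eq_conjTranspose,
    re_trace_mul_diagonal_mul_conjTranspose_mul_diagonal]
  constructor
  · obtain ⟨π, hπ⟩ := (isLeast_range_dotProduct_comp_perm f g).1
    refine ⟨⟨π.permMatrix 𝕜, permMatrix_mem_unitaryGroup π⟩, ?_⟩
    simpa only [map_norm_sq_permMatrix, permMatrix_mulVec] using hπ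
  · rintro _ ⟨X, rfl⟩
    exact sortDown_dotProduct_sortUp_le_of_mem_doublyStochastic
      (map_norm_sq_mem_doublyStochastic X.2) f g

theorem isLeast_range_re_trace_conjStarAlgAut_mul (U W : unitaryGroup ι 𝕜) (f g : ι → ℝ) :
    IsLeast (Set.range fun V : unitaryGroup ι 𝕜 =>
        RCLike.re (conjStarAlgAut 𝕜 _ V (conjStarAlgAut 𝕜 _ W (diagonal (RCLike.ofReal ∘ f))) *
          conjStarAlgAut 𝕜 _ U (diagonal (RCLike.ofReal ∘ g))).trace)
      (sortDown f ⬝ᵥ sortUp g) := by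
  have hsurj : Function.Surjective fun V : unitaryGroup ι 𝕜 => U⁻¹ * V * W :=
    (Group.mulRight_bijective W).surjective.comp (Group.mulLeft_bijective U⁻¹).surjective
  have hmin := isLeast_range_re_trace_conjStarAlgAut_diagonal_mul_diagonal (𝕜 := 𝕜) f g
  rw [← hsurj.range_comp] at hmin
  simpa only [Function.comp_def, trace_conjStarAlgAut_mul_conjStarAlgAut] using hmin

end UnitaryOrbit

theorem ergotropy_conjStarAlgAut_diagonal {ι : Type*} [Fintype ι] [DecidableEq ι]
    {H : Matrix ι ι ℂ} (hH : H.IsHermitian) (W : unitaryGroup ι ℂ) (lam : ι → ℝ) :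
    ergotropy (conjStarAlgAut ℂ _ W (diagonal (RCLike.ofReal ∘ lam))) H
      = (conjStarAlgAut ℂ _ W (diagonal (RCLike.ofReal ∘ lam)) * H).trace.re
        - sortDown lam ⬝ᵥ sortUp hH.eigenvalues := by
  have hmin :=
    isLeast_range_re_trace_conjStarAlgAut_mul hH.eigenvectorUnitary W lam hH.eigenvalues
  rw [← hH.spectral_theorem] at hmin
  rw [ergotropy, ← hmin.csInf_eq]
  rfl

section Ketbra

variable {ι κ : Type*} [Fintype κ]

theorem sum_smul_ketbra [DecidableEq κ] (c : κ → ℂ) (v : κ → ι → ℂ) :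
    ∑ i, c i • ketbra (v i) = (of v)ᵀ * diagonal c * (of v)ᵀᴴ := by
  ext a b
  simp only [Matrix.sum_apply, Matrix.smul_apply, ketbra, vecMulVec_apply, Pi.star_apply,
    smul_eq_mul, mul_apply (N := (of v)ᵀᴴ), mul_diagonal, transpose_apply, of_apply,
    conjTranspose_apply]
  exact Finset.sum_congr rfl fun i _ => by ring

variable [Fintype ι]

theorem trace_sum_smul_ketbra_mul (c : κ → ℂ) (v : κ → ι → ℂ) (H : Matrix ι ι ℂ) :
    ((∑ i, c i • ketbra (v i)) * H).trace = ∑ i, c i * (star (v i) ⬝ᵥ H *ᵥ v i) := by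
  simp only [Finset.sum_mul, trace_sum, smul_mul, trace_smul, smul_eq_mul, ketbra, vecMulVec_mul,
    trace_vecMulVec, dotProduct_comm (v _), dotProduct_mulVec]

end Ketbra

theorem ergotropy_diagonal_state_general {ι : Type*} [Fintype ι] [DecidableEq ι]
    {H : Matrix ι ι ℂ} (hH : H.IsHermitian) (v : ι → ι → ℂ)
    (hv : ∀ i j, star (v i) ⬝ᵥ v j = if i = j then 1 else 0) (lam : ι → ℝ) :
    ergotropy (∑ i, ((lam i : ℝ) : ℂ) • ketbra (v i)) H
      = ∑ i, lam i * (star (v i) ⬝ᵥ H.mulVec (v i)).re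
        - ∑ i, sortDown lam i * sortUp hH.eigenvalues i := by
  have henergy : ((∑ i, (lam i : ℂ) • ketbra (v i)) * H).trace.re
      = ∑ i, lam i * (star (v i) ⬝ᵥ H *ᵥ v i).re := by
    simp only [trace_sum_smul_ketbra_mul, Complex.re_sum, Complex.re_ofReal_mul]
  rw [← henergy, sum_smul_ketbra]
  exact ergotropy_conjStarAlgAut_diagonal hH ⟨_, transpose_of_mem_unitaryGroup hv⟩ lam

/-- ergotropy of a state diagonal in an orthonormal basis. -/
theorem ergotropy_diagonal_state {ι : Type*} [Fintype ι] [DecidableEq ι]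
    {H : Matrix ι ι ℂ} (hH : H.IsHermitian)
    (v : ι → ι → ℂ)
    (hv : ∀ i j, star (v i) ⬝ᵥ v j = if i = j then 1 else 0)
    (lam : ι → ℝ) (hlam : ∀ i, 0 ≤ lam i) (hsum : ∑ i, lam i = 1) :
    ergotropy (∑ i, ((lam i : ℝ) : ℂ) • ketbra (v i)) H
      = ∑ i, lam i * (star (v i) ⬝ᵥ H.mulVec (v i)).re
        - ∑ i, sortDown lam i * sortUp hH.eigenvalues i := by
  exact ergotropy_diagonal_state_general hH v hv lam
end
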